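/- Tight characterization: let t be a checkers term. (1) Correctness: if Γ ⊢^k t : L is derivable with (Γ, L) tight, then there is a checkers head normal form h and an evaluation t →hch* h containing exactly k interaction steps. (2) Completeness: if t →hch* h with h a checkers head normal form and the evaluation contains exactly k interaction steps, then there is a derivation Γ ⊢^k t : L with (Γ, L) tight. -/

import Mathlib

set_option autoImplicit false

/-! ### Players -/

inductive Player : Type
  | white
  | black
deriving DecidableEq

/-- The opposite player. -/
def Player.op : Player → Player
  | .white => .black
  | .black => .white

/-- `gamma p q` is `0` if the players agree (silent) and `1` otherwise (interaction). -/
def Player.gamma (p q : Player) : ℕ := if p = q then 0 else 1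

/-! ### Ordinary λ-terms (de Bruijn representation) -/

inductive Lam : Type
  | var : ℕ → Lam
  | lam : Lam → Lam
  | app : Lam → Lam → Lam
deriving DecidableEq

namespace Lam

/-- Shift the free de Bruijn indices ≥ `d` by one. -/
def liftAt : Lam → ℕ → Lam
  | .var n, d => .var (if n < d then n else n + 1)
  | .lam t, d => .lam (t.liftAt (d + 1))
  | .app t u, d => .app (t.liftAt d) (u.liftAt d)

/-- Capture-avoiding substitution of `u` for the de Bruijn index `x`. -/
def subst : Lam → ℕ → Lam → Lam
  | .var n, x, u => if n = x then u else if x < n then .var (n - 1) else .var n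
  | .lam t, x, u => .lam (t.subst (x + 1) (u.liftAt 0))
  | .app t s, x, u => .app (t.subst x u) (s.subst x u)

end Lam

/-- Root β-rule: `(λx.t) u ↦ t[x:=u]`. -/
inductive LBetaRoot : Lam → Lam → Prop
  | beta (t u : Lam) : LBetaRoot (.app (.lam t) u) (t.subst 0 u)

/-- Root η-rule: `λx. t x ↦ t` with `x ∉ FV(t)` (enforced by the lifting). -/
inductive LEtaRoot : Lam → Lam → Prop
  | eta (t : Lam) : LEtaRoot (.lam (.app (t.liftAt 0) (.var 0))) t

/-- Closure of a root relation under all contexts. -/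
inductive LFull (R : Lam → Lam → Prop) : Lam → Lam → Prop
  | root {t u : Lam} : R t u → LFull R t u
  | lam {t u : Lam} : LFull R t u → LFull R (.lam t) (.lam u)
  | appL {t t' : Lam} (u : Lam) : LFull R t t' → LFull R (.app t u) (.app t' u)
  | appR (t : Lam) {u u' : Lam} : LFull R u u' → LFull R (.app t u) (.app t u')

/-- Closure under applicative spine contexts `⟨·⟩ t1 … tk`. -/
inductive LSpine (R : Lam → Lam → Prop) : Lam → Lam → Prop
  | root {t u : Lam} : R t u → LSpine R t u
  | appL {t t' : Lam} (u : Lam) : LSpine R t t' → LSpine R (.app t u) (.app t' u)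

/-- Closure under head contexts `λx1…xn.⟨·⟩ t1 … tk`. -/
inductive LHead (R : Lam → Lam → Prop) : Lam → Lam → Prop
  | spine {t u : Lam} : LSpine R t u → LHead R t u
  | lam {t u : Lam} : LHead R t u → LHead R (.lam t) (.lam u)

/-- β-reduction. -/
def LBeta : Lam → Lam → Prop := LFull LBetaRoot
/-- η-reduction. -/
def LEta : Lam → Lam → Prop := LFull LEtaRoot
/-- Head reduction. -/
def LHStep : Lam → Lam → Prop := LHead LBetaRoot
/-- Multistep head reduction. -/
def LHSteps : Lam → Lam → Prop := Relation.ReflTransGen LHStep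

/-- β-conversion (reflexive-symmetric-transitive closure of β-reduction). -/
def LBetaConv : Lam → Lam → Prop :=
  Relation.ReflTransGen (fun a b => LBeta a b ∨ LBeta b a)
/-- η-conversion. -/
def LEtaConv : Lam → Lam → Prop :=
  Relation.ReflTransGen (fun a b => LEta a b ∨ LEta b a)

/-- Head normal forms: no head step out of `t`. -/
def Lam.LHNF (t : Lam) : Prop := ∀ u, ¬ LHStep t u

/-- Head convergence: `t ⇓h`. -/
def Lam.HConv (t : Lam) : Prop := ∃ h, LHSteps t h ∧ h.LHNF

/-- Ordinary contexts (one hole). -/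
inductive LCtx : Type
  | hole : LCtx
  | lam : LCtx → LCtx
  | appL : LCtx → Lam → LCtx
  | appR : Lam → LCtx → LCtx

/-- Plugging (allowing variable capture). -/
def LCtx.fill : LCtx → Lam → Lam
  | .hole, t => t
  | .lam C, t => .lam (C.fill t)
  | .appL C u, t => .app (C.fill t) u
  | .appR s C, t => .app s (C.fill t)

/-- Head contextual preorder on λ-terms. -/
def CtxLe (t u : Lam) : Prop := ∀ C : LCtx, (C.fill t).HConv → (C.fill u).HConv

/-! ### Checkers terms -/

inductive CTerm : Type
  | var : ℕ → CTerm
  | lam : Player → CTerm → CTerm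
  | app : Player → CTerm → CTerm → CTerm
deriving DecidableEq

namespace CTerm

/-- Shift the free de Bruijn indices ≥ `d` by one. -/
def liftAt : CTerm → ℕ → CTerm
  | .var n, d => .var (if n < d then n else n + 1)
  | .lam p t, d => .lam p (t.liftAt (d + 1))
  | .app p t u, d => .app p (t.liftAt d) (u.liftAt d)

/-- Capture-avoiding substitution of `u` for the de Bruijn index `x`. -/
def subst : CTerm → ℕ → CTerm → CTerm
  | .var n, x, u => if n = x then u else if x < n then .var (n - 1) else .var n
  | .lam p t, x, u => .lam p (t.subst (x + 1) (u.liftAt 0))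
  | .app p t s, x, u => .app p (t.subst x u) (s.subst x u)

/-- The underlying ordinary λ-term of a checkers term. -/
def untag : CTerm → Lam
  | .var n => .var n
  | .lam _ t => .lam t.untag
  | .app _ t u => .app t.untag u.untag

end CTerm

/-- Player lifting: tag every abstraction and application with player `p`. -/
def Lam.tag : Lam → Player → CTerm
  | .var n, _ => .var n
  | .lam t, p => .lam p (t.tag p)
  | .app t u, p => .app p (t.tag p) (u.tag p)

/-- Silent β root rule: the abstraction and the application carry the same player. -/
inductive SilentRoot : CTerm → CTerm → Prop
  | beta (p : Player) (t u : CTerm) : SilentRoot (.app p (.lam p t) u) (t.subst 0 u)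

/-- Interaction β root rule: the application carries the opposite player of the abstraction. -/
inductive InterRoot : CTerm → CTerm → Prop
  | beta (p : Player) (t u : CTerm) : InterRoot (.app p.op (.lam p t) u) (t.subst 0 u)

/-- Closure of a root relation under all checkers contexts. -/
inductive CFull (R : CTerm → CTerm → Prop) : CTerm → CTerm → Prop
  | root {t u : CTerm} : R t u → CFull R t u
  | lam (p : Player) {t u : CTerm} : CFull R t u → CFull R (.lam p t) (.lam p u)
  | appL (p : Player) {t t' : CTerm} (u : CTerm) : CFull R t t' → CFull R (.app p t u) (.app p t' u)
  | appR (p : Player) (t : CTerm) {u u' : CTerm} : CFull R u u' → CFull R (.app p t u) (.app p t u')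

/-- Closure under applicative spine contexts `⟨·⟩ @_{q1} t1 … @_{qk} tk`. -/
inductive CSpine (R : CTerm → CTerm → Prop) : CTerm → CTerm → Prop
  | root {t u : CTerm} : R t u → CSpine R t u
  | appL (p : Player) {t t' : CTerm} (u : CTerm) : CSpine R t t' → CSpine R (.app p t u) (.app p t' u)

/-- Closure under checkers head contexts `λ_{p1}x1…λ_{pn}xn.⟨·⟩ @_{q1} t1 … @_{qk} tk`. -/
inductive CHead (R : CTerm → CTerm → Prop) : CTerm → CTerm → Prop
  | spine {t u : CTerm} : CSpine R t u → CHead R t u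
  | lam (p : Player) {t u : CTerm} : CHead R t u → CHead R (.lam p t) (.lam p u)

/-- Silent β-reduction `→τ`. -/
def StepTau : CTerm → CTerm → Prop := CFull SilentRoot
/-- Interaction β-reduction `→⊛`. -/
def StepInt : CTerm → CTerm → Prop := CFull InterRoot
/-- Checkers β-reduction `→βch`. -/
def StepBch (t u : CTerm) : Prop := StepTau t u ∨ StepInt t u

/-- Silent head reduction `→hτ`. -/
def HStepTau : CTerm → CTerm → Prop := CHead SilentRoot
/-- Interaction head reduction `→h⊛`. -/
def HStepInt : CTerm → CTerm → Prop := CHead InterRoot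
/-- Checkers head reduction `→hch`. -/
def HStepCh (t u : CTerm) : Prop := HStepTau t u ∨ HStepInt t u

/-- Checkers head normal form. -/
def CTerm.HNF (t : CTerm) : Prop := ∀ u, ¬ HStepCh t u

/-- `BigStep t k` means `t ⇓^k`: the (deterministic) checkers head evaluation of `t`
terminates and performs exactly `k` interaction steps. -/
inductive BigStep : CTerm → ℕ → Prop
  | nf {t : CTerm} : t.HNF → BigStep t 0
  | silent {t u : CTerm} {k : ℕ} : HStepTau t u → BigStep u k → BigStep t k
  | inter {t u : CTerm} {k : ℕ} : HStepInt t u → BigStep u k → BigStep t (k + 1)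

/-- `HRed t n i u`: a checkers head reduction sequence from `t` to `u` of length `n`
containing exactly `i` interaction steps. -/
inductive HRed : CTerm → ℕ → ℕ → CTerm → Prop
  | refl (t : CTerm) : HRed t 0 0 t
  | silent {t u s : CTerm} {n i : ℕ} : HStepTau t u → HRed u n i s → HRed t (n + 1) i s
  | inter {t u s : CTerm} {n i : ℕ} : HStepInt t u → HRed u n i s → HRed t (n + 1) (i + 1) s

/-- Checkers contexts (one hole). -/
inductive CCtx : Type
  | hole : CCtx
  | lam : Player → CCtx → CCtx
  | appL : Player → CCtx → CTerm → CCtx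
  | appR : Player → CTerm → CCtx → CCtx

/-- Plugging (allowing variable capture). -/
def CCtx.fill : CCtx → CTerm → CTerm
  | .hole, t => t
  | .lam p C, t => .lam p (C.fill t)
  | .appL p C u, t => .app p (C.fill t) u
  | .appR p s C, t => .app p s (C.fill t)

/-- Player lifting of ordinary contexts. -/
def LCtx.tag : LCtx → Player → CCtx
  | .hole, _ => .hole
  | .lam C, p => .lam p (C.tag p)
  | .appL C u, p => .appL p (C.tag p) (u.tag p)
  | .appR s C, p => .appR p (s.tag p) (C.tag p)

/-- Checkers interaction preorder `≼ctx⊛` on checkers terms. -/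
def IntCtxLe (t u : CTerm) : Prop :=
  ∀ (C : CCtx) (k : ℕ), BigStep (C.fill t) k → BigStep (C.fill u) k

/-- Checkers interaction improvement `≼imp⊛` on checkers terms. -/
def ImpCtxLe (t u : CTerm) : Prop :=
  ∀ (C : CCtx) (k : ℕ), BigStep (C.fill t) k → ∃ k', k' ≤ k ∧ BigStep (C.fill u) k'

/-- Interaction preorder `⊑int` on ordinary λ-terms, via black lifting. -/
def IntLe (t u : Lam) : Prop := IntCtxLe (t.tag .black) (u.tag .black)

/-- Interaction improvement `⊑int·imp` on ordinary λ-terms, via black lifting. -/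
def ImpLe (t u : Lam) : Prop := ImpCtxLe (t.tag .black) (u.tag .black)

/-- Interaction equivalence `≡int`. -/
def IntEq (t u : Lam) : Prop := IntLe t u ∧ IntLe u t

/-- Silent conversion `=τ`: reflexive-symmetric-transitive closure of `→τ`. -/
def SilentConv : CTerm → CTerm → Prop :=
  Relation.ReflTransGen (fun a b => StepTau a b ∨ StepTau b a)


/-! ### Checkers multi types -/

/-- Linear types: an atom `X` and arrows `M →_{p,q} L`, where a multi type `M`
is a finite multiset of linear types (syntactically represented as a list). -/
inductive LType : Type
  | atom : LType
  | arrow : List LType → Player → Player → LType → LType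

/-- Type environments: a multi type for every de Bruijn index. -/
abbrev TEnv : Type := ℕ → Multiset LType

/-- The empty type environment. -/
def TEnv.zero : TEnv := fun _ => 0

/-- Pointwise multiset union of type environments. -/
def TEnv.add (Γ Δ : TEnv) : TEnv := fun n => Γ n + Δ n

/-- The environment assigning `[L]` to `x` and `0` elsewhere. -/
def TEnv.single (x : ℕ) (L : LType) : TEnv := fun n => if n = x then {L} else 0

/-- Extend an environment with a multi type for the freshly bound de Bruijn index `0`. -/
def TEnv.cons (M : Multiset LType) (Γ : TEnv) : TEnv := fun n =>
  match n with
  | 0 => M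
  | n + 1 => Γ n

mutual
  /-- Type derivations `π ▷ Γ ⊢^k t : L` of the checkers multi type system. -/
  inductive Deriv : TEnv → ℕ → CTerm → LType → Type
    | ax (x : ℕ) (L : LType) : Deriv (TEnv.single x L) 0 (.var x) L
    | lam {Γ : TEnv} {k : ℕ} {t : CTerm} {L : LType} (p q : Player) (M : List LType) :
        Deriv (TEnv.cons (Multiset.ofList M) Γ) k t L →
        Deriv Γ k (.lam p t) (.arrow M p q L)
    | app {Γ Δ : TEnv} {k₁ k₂ : ℕ} {t u : CTerm} {M : List LType} {p q : Player} {L : LType} :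
        Deriv Γ k₁ t (.arrow M p q L) → DerivM Δ k₂ u M →
        Deriv (TEnv.add Γ Δ) (k₁ + k₂ + Player.gamma p q) (.app q t u) L
  /-- Derivations `Γ ⊢^k t : M` of a multi type (the `many` rule). -/
  inductive DerivM : TEnv → ℕ → CTerm → List LType → Type
    | nil (t : CTerm) : DerivM TEnv.zero 0 t []
    | cons {Γ Δ : TEnv} {k k' : ℕ} {t : CTerm} {L : LType} {M : List LType} :
        Deriv Γ k t L → DerivM Δ k' t M → DerivM (TEnv.add Γ Δ) (k + k') t (L :: M)
end

mutual
  /-- The (applicative) size `|π|` of a derivation: its number of `@` rules. -/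
  def Deriv.size {Γ : TEnv} {k : ℕ} {t : CTerm} {L : LType} : Deriv Γ k t L → ℕ
    | .ax _ _ => 0
    | .lam _ _ _ π => Deriv.size π
    | .app π μ => Deriv.size π + DerivM.size μ + 1
  /-- Size of a multi-type derivation. -/
  def DerivM.size {Γ : TEnv} {k : ℕ} {t : CTerm} {M : List LType} : DerivM Γ k t M → ℕ
    | .nil _ => 0
    | .cons π μ => Deriv.size π + DerivM.size μ
end

/-- Typability `Γ ⊢^k t : L`. -/
def TJ (Γ : TEnv) (k : ℕ) (t : CTerm) (L : LType) : Prop := Nonempty (Deriv Γ k t L)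

/-- Checkers relational interpretation `⟦t⟧⊛ = {(Γ, k, L) | Γ ⊢^k t : L}`. -/
def CSem (t : CTerm) : Set (TEnv × ℕ × LType) := {x | TJ x.1 x.2.1 t x.2.2}

/-- Black type preorder `⊑•type` on ordinary λ-terms. -/
def BTypeLe (t u : Lam) : Prop := CSem (t.tag .black) ⊆ CSem (u.tag .black)

/-! ### Tight typings -/

/-- All arrows occurring in a linear type are silent (`p = q`). -/
inductive AllSilent : LType → Prop
  | atom : AllSilent .atom
  | arrow {M : List LType} {p : Player} {L : LType} :
      (∀ L' ∈ M, AllSilent L') → AllSilent L → AllSilent (.arrow M p p L)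

/-- The number of nonempty multi types occurring in a linear type. -/
def LType.neCount : LType → ℕ
  | .atom => 0
  | .arrow M _ _ L =>
      min M.length 1 + (M.attach.map fun x => LType.neCount x.1).sum + LType.neCount L
decreasing_by
  · have := List.sizeOf_lt_of_mem x.2
    simp only [LType.arrow.sizeOf_spec]
    omega
  · simp only [LType.arrow.sizeOf_spec]
    omega

/-- The number of nonempty multi types occurring in a multi type (counting itself). -/
def mNeCount (m : Multiset LType) : ℕ :=
  min (Multiset.card m) 1 + (m.map LType.neCount).sum

/-- A typing `(Γ, L)` is tight when all the multi types occurring in `Γ` and `L`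
are empty except for exactly one, and all arrows occurring in `(Γ, L)` are silent. -/
def Tight (Γ : TEnv) (L : LType) : Prop :=
  AllSilent L ∧ (∀ n : ℕ, ∀ L' ∈ Γ n, AllSilent L') ∧
    ∃ S : Finset ℕ, (∀ n : ℕ, n ∉ S → Γ n = 0) ∧
      (∑ n ∈ S, mNeCount (Γ n)) + LType.neCount L = 1

/-! ### Weights: environment, interaction count, size -/

abbrev WT : Type := TEnv × ℕ × ℕ

def ManyP (P : WT → LType → Prop) : WT → List LType → Prop
  | w, [] => w = 0
  | w, L :: M => ∃ w1 w2, w = w1 + w2 ∧ P w1 L ∧ ManyP P w2 M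

def consW (M : Multiset LType) (w : WT) : WT := (TEnv.cons M w.1, w.2)
def rmW (x : ℕ) (w : WT) : WT := (fun n => if n < x then w.1 n else w.1 (n + 1), w.2)
def insW (x : ℕ) (w : WT) : WT :=
  (fun n => if n < x then w.1 n else if n = x then 0 else w.1 (n - 1), w.2)

def Typ : CTerm → WT → LType → Prop
  | .var x, w, L => w = (TEnv.single x L, 0, 0)
  | .lam p t, w, L => ∃ q M L', L = .arrow M p q L' ∧ Typ t (consW (Multiset.ofList M) w) L'
  | .app q t u, w, L => ∃ w1 w2 M p, Typ t w1 (.arrow M p q L) ∧ ManyP (Typ u) w2 M ∧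
      w = w1 + w2 + (0, Player.gamma p q, 1)

mutual
theorem typ_of_deriv {Γ : TEnv} {k : ℕ} {t : CTerm} {L : LType} :
    Deriv Γ k t L → ∃ s, Typ t (Γ, k, s) L
  | .ax x L => ⟨0, rfl⟩
  | .lam p q M π => by
      obtain ⟨s, h⟩ := typ_of_deriv π
      exact ⟨s, q, M, _, rfl, h⟩
  | .app (p := p) (q := q) π μ => by
      obtain ⟨s, h⟩ := typ_of_deriv π
      obtain ⟨s', h'⟩ := many_of_derivM μ
      refine ⟨s + s' + 1, _, _, _, _, h, h', ?_⟩
      refine Prod.ext ?_ rfl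
      funext n
      simp [TEnv.add]
theorem many_of_derivM {Γ : TEnv} {k : ℕ} {t : CTerm} {M : List LType} :
    DerivM Γ k t M → ∃ s, ManyP (Typ t) (Γ, k, s) M
  | .nil t => ⟨0, rfl⟩
  | .cons π μ => by
      obtain ⟨s, h⟩ := typ_of_deriv π
      obtain ⟨s', h'⟩ := many_of_derivM μ
      exact ⟨s + s', _, _, rfl, h, h'⟩
end

theorem derivM_of_many (t : CTerm) (ht : ∀ w L, Typ t w L → Nonempty (Deriv w.1 w.2.1 t L))
    (M : List LType) : ∀ w, ManyP (Typ t) w M → Nonempty (DerivM w.1 w.2.1 t M) := by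
  induction M with
  | nil => rintro w rfl; exact ⟨DerivM.nil t⟩
  | cons L M ih =>
    rintro w ⟨w1, w2, rfl, h1, h2⟩
    obtain ⟨a⟩ := ht _ _ h1
    obtain ⟨b⟩ := ih _ h2
    exact ⟨DerivM.cons a b⟩

theorem deriv_of_typ (t : CTerm) : ∀ w L, Typ t w L → Nonempty (Deriv w.1 w.2.1 t L) := by
  induction t with
  | var x => rintro w L rfl; exact ⟨Deriv.ax x L⟩
  | lam p t ih =>
    rintro w L ⟨q, M, L', rfl, h⟩
    obtain ⟨a⟩ := ih _ _ h
    exact ⟨Deriv.lam p q M a⟩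
  | app q t u iht ihu =>
    rintro w L ⟨w1, w2, M, p, h1, h2, rfl⟩
    obtain ⟨a⟩ := iht _ _ h1
    obtain ⟨b⟩ := derivM_of_many u ihu M _ h2
    have := Deriv.app a b
    have e : (w1 + w2 + ((0, Player.gamma p q, 1) : WT)).1 = TEnv.add w1.1 w2.1 := by
      funext n; simp [TEnv.add]
    rw [e]
    exact ⟨this⟩

/-! ### Many -/

theorem many_append (P : WT → LType → Prop) (M N : List LType) : ∀ w,
    ManyP P w (M ++ N) ↔ ∃ w1 w2, w = w1 + w2 ∧ ManyP P w1 M ∧ ManyP P w2 N := by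
  induction M with
  | nil =>
    intro w
    constructor
    · intro h; exact ⟨0, w, by simp, rfl, h⟩
    · rintro ⟨w1, w2, rfl, rfl, h⟩; simpa using h
  | cons L M ih =>
    intro w
    constructor
    · rintro ⟨a, b, rfl, ha, hb⟩
      obtain ⟨c, d, rfl, hc, hd⟩ := (ih _).1 hb
      exact ⟨a + c, d, by rw [add_assoc], ⟨a, c, rfl, ha, hc⟩, hd⟩
    · rintro ⟨w1, d, rfl, ⟨a, c, rfl, ha, hc⟩, hd⟩
      exact ⟨a, c + d, by rw [add_assoc], ha, (ih _).2 ⟨c, d, rfl, hc, hd⟩⟩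

theorem many_perm (P : WT → LType → Prop) {M N : List LType} (h : M.Perm N) : ∀ w,
    ManyP P w M → ManyP P w N := by
  induction h with
  | nil => intro w h; exact h
  | cons x _ ih => rintro w ⟨a, b, e, ha, hb⟩; exact ⟨a, b, e, ha, ih _ hb⟩
  | swap x y l =>
    rintro w ⟨a, b, rfl, ha, c, d, rfl, hc, hd⟩
    exact ⟨c, a + d, by abel, hc, a, d, rfl, ha, hd⟩
  | trans _ _ ih1 ih2 => intro w h; exact ih2 _ (ih1 _ h)

def MM (P : WT → LType → Prop) (w : WT) (m : Multiset LType) : Prop :=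
  ∃ l : List LType, (l : Multiset LType) = m ∧ ManyP P w l

theorem mm_coe (P : WT → LType → Prop) (w : WT) (l : List LType) :
    MM P w (l : Multiset LType) ↔ ManyP P w l := by
  constructor
  · rintro ⟨l', e, h⟩
    exact many_perm P (Multiset.coe_eq_coe.1 e) _ h
  · intro h; exact ⟨l, rfl, h⟩

theorem mm_zero (P : WT → LType → Prop) (w : WT) : MM P w 0 ↔ w = 0 :=
  mm_coe P w []

theorem mm_single (P : WT → LType → Prop) (w : WT) (L : LType) : MM P w {L} ↔ P w L := by
  refine (mm_coe P w [L]).trans ?_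
  constructor
  · rintro ⟨a, b, rfl, h, rfl⟩; simpa using h
  · intro h; exact ⟨w, 0, by simp, h, rfl⟩

theorem mm_add (P : WT → LType → Prop) (w : WT) (m n : Multiset LType) :
    MM P w (m + n) ↔ ∃ w1 w2, w = w1 + w2 ∧ MM P w1 m ∧ MM P w2 n := by
  induction m using Quotient.inductionOn with | _ m => ?_
  induction n using Quotient.inductionOn with | _ n => ?_
  change MM P w ((m : Multiset LType) + (n : Multiset LType)) ↔
    ∃ w1 w2, w = w1 + w2 ∧ MM P w1 (m : Multiset LType) ∧ MM P w2 (n : Multiset LType)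
  rw [Multiset.coe_add]
  simp only [mm_coe]
  exact many_append P m n w

/-! ### Weight manipulation -/

theorem rmW_add (x : ℕ) (a b : WT) : rmW x (a + b) = rmW x a + rmW x b := by
  refine Prod.ext ?_ rfl
  funext n; simp only [rmW, Prod.fst_add, Pi.add_apply]; split <;> rfl

theorem insW_add (x : ℕ) (a b : WT) : insW x (a + b) = insW x a + insW x b := by
  refine Prod.ext ?_ rfl
  funext n; simp only [insW, Prod.fst_add, Pi.add_apply]; split_ifs <;> simp

theorem rmW_zero (x : ℕ) (a : ℕ × ℕ) : rmW x (0, a) = (0, a) := by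
  refine Prod.ext ?_ rfl
  funext n; simp [rmW]

theorem insW_zero (x : ℕ) (a : ℕ × ℕ) : insW x (0, a) = (0, a) := by
  refine Prod.ext ?_ rfl
  funext n; simp [insW]

theorem rm_cons (x : ℕ) (M : Multiset LType) (w : WT) :
    rmW (x + 1) (consW M w) = consW M (rmW x w) := by
  refine Prod.ext ?_ rfl
  funext n; cases n <;> simp [rmW, consW, TEnv.cons]

theorem ins_cons (x : ℕ) (M : Multiset LType) (w : WT) :
    insW (x + 1) (consW M w) = consW M (insW x w) := by
  refine Prod.ext ?_ rfl
  funext n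
  rcases n with _ | _ | n
  · simp [insW, consW, TEnv.cons]
  · cases x <;> simp [insW, consW, TEnv.cons]
  · simp [insW, consW, TEnv.cons]

theorem cons_add_ins (M : Multiset LType) (a b : WT) :
    consW M a + insW 0 b = consW M (a + b) := by
  refine Prod.ext ?_ rfl
  funext n; cases n <;> simp [insW, consW, TEnv.cons]

theorem cons_inj {M N : Multiset LType} {a b : WT} : consW M a = consW N b ↔ M = N ∧ a = b := by
  constructor
  · intro h
    refine ⟨congrFun (congrArg Prod.fst h) 0, Prod.ext ?_ (congrArg Prod.snd h :)⟩
    funext n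
    exact congrFun (congrArg Prod.fst h) (n + 1)
  · rintro ⟨rfl, rfl⟩; rfl

theorem eq_cons (w : WT) : w = consW (w.1 0) (rmW 0 w) := by
  refine Prod.ext ?_ rfl
  funext n; cases n <;> simp [rmW, consW, TEnv.cons]

theorem exists_cons (w : WT) : ∃ M w', w = consW M w' := ⟨_, _, eq_cons w⟩

/-! ### Lifting -/

theorem many_map (P Q : WT → LType → Prop) (f : WT → WT) (h0 : f 0 = 0)
    (hf : ∀ a b, f (a + b) = f a + f b)
    (h : ∀ w L, P w L ↔ ∃ w', w = f w' ∧ Q w' L) (M : List LType) :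
    ∀ w, ManyP P w M ↔ ∃ w', w = f w' ∧ ManyP Q w' M := by
  induction M with
  | nil =>
    intro w
    constructor
    · rintro rfl; exact ⟨0, h0.symm, rfl⟩
    · rintro ⟨w', rfl, rfl⟩; exact h0
  | cons L M ih =>
    intro w
    constructor
    · rintro ⟨a, b, rfl, ha, hb⟩
      obtain ⟨a', rfl, ka⟩ := (h _ _).1 ha
      obtain ⟨b', rfl, kb⟩ := (ih _).1 hb
      exact ⟨a' + b', (hf _ _).symm, _, _, rfl, ka, kb⟩
    · rintro ⟨w', rfl, a, b, rfl, ha, hb⟩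
      exact ⟨f a, f b, hf _ _, (h _ _).2 ⟨a, rfl, ha⟩, (ih _).2 ⟨b, rfl, hb⟩⟩

theorem typ_lift (t : CTerm) : ∀ d w L,
    Typ (t.liftAt d) w L ↔ ∃ w', w = insW d w' ∧ Typ t w' L := by
  induction t with
  | var n =>
    intro d w L
    simp only [CTerm.liftAt, Typ, exists_eq_right]
    have : ((TEnv.single (if n < d then n else n + 1) L, 0, 0) : WT)
        = insW d (TEnv.single n L, 0, 0) := by
      refine Prod.ext ?_ rfl
      funext m
      simp only [insW, TEnv.single]
      split_ifs <;> first | rfl | omega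
    rw [this]
  | lam p t ih =>
    intro d w L
    simp only [CTerm.liftAt, Typ, ih]
    constructor
    · rintro ⟨q, M, L', rfl, w', e, h⟩
      obtain ⟨N, w', rfl⟩ := exists_cons w'
      rw [ins_cons, cons_inj] at e
      obtain ⟨rfl, rfl⟩ := e
      exact ⟨w', rfl, q, M, L', rfl, h⟩
    · rintro ⟨w', rfl, q, M, L', rfl, h⟩
      exact ⟨q, M, L', rfl, _, (ins_cons _ _ _).symm, h⟩
  | app q t u iht ihu =>
    intro d w L
    have hm := many_map (Typ (u.liftAt d)) (Typ u) (insW d) (insW_zero d 0) (insW_add d) (ihu d)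
    simp only [CTerm.liftAt, Typ]
    constructor
    · rintro ⟨a, b, M, p, ha, hb, rfl⟩
      obtain ⟨a', rfl, ka⟩ := (iht _ _ _).1 ha
      obtain ⟨b', rfl, kb⟩ := (hm _ _).1 hb
      exact ⟨a' + b' + (0, Player.gamma p q, 1), by rw [insW_add, insW_add, insW_zero],
        a', b', M, p, ka, kb, rfl⟩
    · rintro ⟨w', rfl, a, b, M, p, ha, hb, rfl⟩
      exact ⟨insW d a, insW d b, M, p, (iht _ _ _).2 ⟨a, rfl, ha⟩, (hm _ _).2 ⟨b, rfl, hb⟩,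
        by rw [insW_add, insW_add, insW_zero]⟩

/-! ### Substitution -/

theorem many_subst (P Q : WT → LType → Prop) (x : ℕ) (R : WT → LType → Prop)
    (h : ∀ w L, P w L ↔ ∃ w1 w2, w = rmW x w1 + w2 ∧ Q w1 L ∧ MM R w2 (w1.1 x))
    (M : List LType) : ∀ w, ManyP P w M ↔
      ∃ w1 w2, w = rmW x w1 + w2 ∧ ManyP Q w1 M ∧ MM R w2 (w1.1 x) := by
  induction M with
  | nil =>
    intro w
    constructor
    · rintro rfl
      exact ⟨0, 0, by rw [add_zero]; exact (rmW_zero x 0).symm, rfl, (mm_zero _ _).2 rfl⟩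
    · rintro ⟨w1, w2, rfl, rfl, h⟩
      rw [(mm_zero R w2).1 h, add_zero]; exact rmW_zero x 0
  | cons L M ih =>
    intro w
    constructor
    · rintro ⟨a, b, rfl, ha, hb⟩
      obtain ⟨a1, a2, rfl, ha, ha'⟩ := (h _ _).1 ha
      obtain ⟨b1, b2, rfl, hb, hb'⟩ := (ih _).1 hb
      exact ⟨a1 + b1, a2 + b2, by rw [rmW_add]; abel, ⟨_, _, rfl, ha, hb⟩,
        (mm_add _ _ _ _).2 ⟨_, _, rfl, ha', hb'⟩⟩
    · rintro ⟨w1, w2, rfl, ⟨a, b, rfl, ha, hb⟩, hr⟩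
      obtain ⟨c, d, rfl, hc, hd⟩ := (mm_add R w2 (a.1 x) (b.1 x)).1 hr
      exact ⟨rmW x a + c, rmW x b + d, by rw [rmW_add]; abel,
        (h _ _).2 ⟨a, c, rfl, ha, hc⟩, (ih _).2 ⟨b, d, rfl, hb, hd⟩⟩

theorem mm_lift (u : CTerm) (w : WT) (m : Multiset LType) :
    MM (Typ (u.liftAt 0)) w m ↔ ∃ w', w = insW 0 w' ∧ MM (Typ u) w' m := by
  induction m using Quotient.inductionOn with | _ m => ?_
  change MM _ w (m : Multiset LType) ↔ ∃ w', _ ∧ MM _ w' (m : Multiset LType)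
  simp only [mm_coe]
  exact many_map _ _ (insW 0) (insW_zero 0 0) (insW_add 0) (typ_lift u 0) m w

theorem typ_subst (t : CTerm) : ∀ x u w L, Typ (t.subst x u) w L ↔
    ∃ w1 w2, w = rmW x w1 + w2 ∧ Typ t w1 L ∧ MM (Typ u) w2 (w1.1 x) := by
  induction t with
  | var n =>
    intro x u w L
    have key : (∃ w1 w2, w = rmW x w1 + w2 ∧ Typ (.var n) w1 L ∧ MM (Typ u) w2 (w1.1 x)) ↔
        ∃ w2, w = rmW x (TEnv.single n L, 0, 0) + w2 ∧ MM (Typ u) w2 (TEnv.single n L x) := by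
      constructor
      · rintro ⟨w1, w2, h, rfl, h'⟩; exact ⟨w2, h, h'⟩
      · rintro ⟨w2, h, h'⟩; exact ⟨_, w2, h, rfl, h'⟩
    rw [key]
    by_cases hx : n = x
    · subst hx
      have e : rmW n (TEnv.single n L, 0, 0) = 0 := by
        refine Prod.ext ?_ rfl
        funext m
        simp only [rmW, TEnv.single]
        split_ifs <;> first | rfl | omega
      have e2 : TEnv.single n L n = {L} := by simp [TEnv.single]
      simp [CTerm.subst, e, e2, mm_single]
    · have e2 : TEnv.single n L x = 0 := by simp [TEnv.single, Ne.symm hx]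
      simp only [CTerm.subst, if_neg hx, e2, mm_zero, exists_eq_right, add_zero]
      split_ifs with hlt
      · have e : rmW x (TEnv.single n L, 0, 0) = (TEnv.single (n - 1) L, 0, 0) := by
          refine Prod.ext ?_ rfl
          funext m
          simp only [rmW, TEnv.single]
          split_ifs <;> first | rfl | omega
        rw [e]; rfl
      · have e : rmW x (TEnv.single n L, 0, 0) = (TEnv.single n L, 0, 0) := by
          refine Prod.ext ?_ rfl
          funext m
          simp only [rmW, TEnv.single]
          split_ifs <;> first | rfl | omega
        rw [e]; rfl
  | lam p t ih =>
    intro x u w L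
    simp only [CTerm.subst, Typ, ih]
    constructor
    · rintro ⟨q, M, L', rfl, w1, w2, e, h, h'⟩
      obtain ⟨w2, rfl, k'⟩ := (mm_lift _ _ _).1 h'
      obtain ⟨N, w1, rfl⟩ := exists_cons w1
      rw [rm_cons, cons_add_ins, cons_inj] at e
      obtain ⟨rfl, rfl⟩ := e
      exact ⟨w1, w2, rfl, ⟨q, M, L', rfl, h⟩, k'⟩
    · rintro ⟨w1, w2, rfl, ⟨q, M, L', rfl, h⟩, h'⟩
      exact ⟨q, M, L', rfl, _, insW 0 w2, by rw [rm_cons, cons_add_ins], h,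
        (mm_lift _ _ _).2 ⟨w2, rfl, h'⟩⟩
  | app q t s iht ihs =>
    intro x u w L
    have hm := many_subst (Typ (s.subst x u)) (Typ s) x (Typ u) (ihs x u)
    simp only [CTerm.subst, Typ]
    constructor
    · rintro ⟨a, b, M, p, ha, hb, rfl⟩
      obtain ⟨a1, a2, rfl, ha, ha'⟩ := (iht _ _ _ _).1 ha
      obtain ⟨b1, b2, rfl, hb, hb'⟩ := (hm _ _).1 hb
      refine ⟨a1 + b1 + (0, Player.gamma p q, 1), a2 + b2, ?_, ⟨a1, b1, M, p, ha, hb, rfl⟩, ?_⟩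
      · rw [rmW_add, rmW_add, rmW_zero]; abel
      · have e : (a1 + b1 + ((0, Player.gamma p q, 1) : WT)).1 x = a1.1 x + b1.1 x := by simp
        rw [e]
        exact (mm_add _ _ _ _).2 ⟨_, _, rfl, ha', hb'⟩
    · rintro ⟨w1, w2, rfl, ⟨a, b, M, p, ha, hb, rfl⟩, hr⟩
      have e : (a + b + ((0, Player.gamma p q, 1) : WT)).1 x = a.1 x + b.1 x := by simp
      rw [e] at hr
      obtain ⟨c, d, rfl, hc, hd⟩ := (mm_add _ _ _ _).1 hr
      exact ⟨rmW x a + c, rmW x b + d, M, p, (iht _ _ _ _).2 ⟨a, c, rfl, ha, hc⟩,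
        (hm _ _).2 ⟨b, d, rfl, hb, hd⟩, by rw [rmW_add, rmW_add, rmW_zero]; abel⟩

/-! ### Steps -/

theorem typ_beta (p q : Player) (t u : CTerm) (w : WT) (L : LType) :
    Typ (.app q (.lam p t) u) w L ↔
      ∃ w', w = w' + (0, Player.gamma p q, 1) ∧ Typ (t.subst 0 u) w' L := by
  simp only [typ_subst]
  constructor
  · rintro ⟨a, b, M, p', ⟨q', M', L', e, ha⟩, hb, rfl⟩
    injection e with e1 e2 e3 e4
    subst e1 e2 e3 e4
    refine ⟨a + b, rfl, _, b, ?_, ha, (mm_coe _ _ _).2 hb⟩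
    rfl
  · rintro ⟨w', rfl, w1, w2, rfl, h, l, hl, h'⟩
    refine ⟨rmW 0 w1, w2, l, p, ⟨q, l, L, rfl, ?_⟩, h', rfl⟩
    rw [hl, ← eq_cons]
    exact h

def StepOK (g : ℕ) (t u : CTerm) : Prop :=
  ∀ w L, Typ t w L ↔ ∃ w', w = w' + (0, g, 1) ∧ Typ u w' L

theorem stepOK_spine {R : CTerm → CTerm → Prop} {g : ℕ} (hR : ∀ t u, R t u → StepOK g t u)
    {t u : CTerm} (h : CSpine R t u) : StepOK g t u := by
  induction h with
  | root h => exact hR _ _ h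
  | appL q s _ ih =>
    intro w L
    constructor
    · rintro ⟨a, b, M, p, ha, hb, rfl⟩
      obtain ⟨a, rfl, ka⟩ := (ih _ _).1 ha
      exact ⟨a + b + (0, Player.gamma p q, 1), by abel, a, b, M, p, ka, hb, rfl⟩
    · rintro ⟨w', rfl, a, b, M, p, ha, hb, rfl⟩
      exact ⟨a + (0, g, 1), b, M, p, (ih _ _).2 ⟨a, rfl, ha⟩, hb, by abel⟩

theorem cons_add0 (M : Multiset LType) (a : WT) (b : ℕ × ℕ) :
    consW M a + (0, b) = consW M (a + (0, b)) := by
  have := cons_add_ins M a (0, b)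
  rwa [insW_zero] at this

theorem stepOK_head {R : CTerm → CTerm → Prop} {g : ℕ} (hR : ∀ t u, R t u → StepOK g t u)
    {t u : CTerm} (h : CHead R t u) : StepOK g t u := by
  induction h with
  | spine h => exact stepOK_spine hR h
  | lam p _ ih =>
    intro w L
    constructor
    · rintro ⟨q, M, L', rfl, h⟩
      obtain ⟨w', e, k⟩ := (ih _ _).1 h
      obtain ⟨N, w', rfl⟩ := exists_cons w'
      rw [cons_add0, cons_inj] at e
      obtain ⟨rfl, rfl⟩ := e
      exact ⟨w', rfl, q, M, L', rfl, k⟩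
    · rintro ⟨w', rfl, q, M, L', rfl, h⟩
      exact ⟨q, M, L', rfl, (ih _ _).2 ⟨_, (cons_add0 _ _ _).symm, h⟩⟩

theorem tau_ok {t u : CTerm} (h : HStepTau t u) : StepOK 0 t u := by
  refine stepOK_head ?_ h
  rintro _ _ ⟨p, t, u⟩ w L
  rw [typ_beta]; simp [Player.gamma]

theorem int_ok {t u : CTerm} (h : HStepInt t u) : StepOK 1 t u := by
  refine stepOK_head ?_ h
  rintro _ _ ⟨p, t, u⟩ w L
  rw [typ_beta]; cases p <;> simp [Player.gamma, Player.op]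

/-! ### Head normal forms -/

inductive Neut : CTerm → Prop
  | var (x : ℕ) : Neut (.var x)
  | app (q : Player) {t : CTerm} (u : CTerm) : Neut t → Neut (.app q t u)

theorem hnf_lam {p : Player} {t : CTerm} (h : (CTerm.lam p t).HNF) : t.HNF := by
  rintro u (hu | hu)
  · exact h _ (Or.inl (.lam p hu))
  · exact h _ (Or.inr (.lam p hu))

theorem hnf_not_beta {p q : Player} {t u : CTerm} : ¬ (CTerm.app q (.lam p t) u).HNF := by
  intro h
  cases p <;> cases q
  · exact h _ (Or.inl (.spine (.root (.beta .white t u))))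
  · exact h _ (Or.inr (.spine (.root (.beta .white t u))))
  · exact h _ (Or.inr (.spine (.root (.beta .black t u))))
  · exact h _ (Or.inl (.spine (.root (.beta .black t u))))

theorem hnf_cases (t : CTerm) (h : t.HNF) : Neut t ∨ ∃ p s, t = .lam p s := by
  induction t with
  | var x => exact Or.inl (.var x)
  | lam p s _ => exact Or.inr ⟨p, s, rfl⟩
  | app q t u iht _ =>
    left
    have hl : ∀ p s, t ≠ .lam p s := by
      rintro p s rfl; exact hnf_not_beta h
    have ht : t.HNF := by
      rintro v (hv | hv)
      · cases hv with
        | spine hv => exact h _ (Or.inl (.spine (.appL q u hv)))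
        | lam p _ => exact hl _ _ rfl
      · cases hv with
        | spine hv => exact h _ (Or.inr (.spine (.appL q u hv)))
        | lam p _ => exact hl _ _ rfl
    rcases iht ht with h' | ⟨p, s, rfl⟩
    · exact .app q u h'
    · exact absurd rfl (hl p s)

theorem neCount_arrow (M : List LType) (p q : Player) (L : LType) :
    LType.neCount (.arrow M p q L) = mNeCount (M : Multiset LType) + LType.neCount L := by
  rw [LType.neCount, mNeCount]
  simp

theorem mNeCount_mem {m : Multiset LType} {L : LType} (h : L ∈ m) :
    1 + LType.neCount L ≤ mNeCount m := by
  have h1 : 0 < Multiset.card m := Multiset.card_pos_iff_exists_mem.2 ⟨L, h⟩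
  have h2 : LType.neCount L ≤ (m.map LType.neCount).sum :=
    Multiset.single_le_sum (fun _ _ => Nat.zero_le _) _ (Multiset.mem_map_of_mem _ h)
  rw [mNeCount]; omega

theorem neut_correct {t : CTerm} (h : Neut t) : ∀ w L, Typ t w L →
    ∃ x, ∃ L' ∈ w.1 x, AllSilent L' → LType.neCount L' = 0 →
      AllSilent L ∧ LType.neCount L = 0 ∧ w.2.1 = 0 := by
  induction h with
  | var x =>
    rintro w L rfl
    exact ⟨x, L, by simp [TEnv.single], fun a b => ⟨a, b, rfl⟩⟩
  | app q u _ ih =>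
    rintro w L ⟨a, b, M, p, ha, hb, rfl⟩
    obtain ⟨x, L', hm, hL⟩ := ih _ _ ha
    refine ⟨x, L', by simp [hm], fun h1 h2 => ?_⟩
    obtain ⟨h3, h4, h5⟩ := hL h1 h2
    rw [neCount_arrow] at h4
    cases M with
    | cons A M =>
      have := mNeCount_mem (m := ((A :: M : List LType) : Multiset LType)) (L := A) (by simp)
      omega
    | nil =>
      have hb' : b = 0 := hb
      subst hb'
      cases h3 with
      | arrow _ h3 => exact ⟨h3, by omega, by simp [h5, Player.gamma]⟩

theorem hnf_correct (t : CTerm) : t.HNF → ∀ w L, Typ t w L → AllSilent L →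
    (∀ n, ∀ L' ∈ w.1 n, AllSilent L') → (∀ n, mNeCount (w.1 n) ≤ 1) → LType.neCount L ≤ 1 →
    w.2.1 = 0 := by
  induction t with
  | lam p s ih =>
    rintro h w L ⟨q, M, L', rfl, hs⟩ hL hw hn hc
    rw [neCount_arrow] at hc
    cases hL with
    | arrow hM hL =>
      refine ih (hnf_lam h) (consW (M : Multiset LType) w) _ hs hL ?_ ?_ (by omega)
      · rintro (_ | n)
        · exact hM
        · exact hw n
      · rintro (_ | n)
        · change mNeCount (M : Multiset LType) ≤ 1
          omega
        · exact hn n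
  | var x => rintro h w L rfl; intros; rfl
  | app q t u _ _ =>
    intro h w L ht hL hw hn hc
    rcases hnf_cases _ h with h | ⟨_, _, e⟩
    · obtain ⟨x, L', hm, hx⟩ := neut_correct h w L ht
      have := mNeCount_mem hm
      have := hn x
      exact (hx (hw x L' hm) (by omega)).2.2
    · cases e

theorem tight_bounds {Γ : TEnv} {L : LType} (h : Tight Γ L) :
    (∀ n, mNeCount (Γ n) ≤ 1) ∧ LType.neCount L ≤ 1 := by
  obtain ⟨_, _, S, h0, h1⟩ := h
  refine ⟨fun n => ?_, by omega⟩
  by_cases hn : n ∈ S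
  · have := Finset.single_le_sum (f := fun n => mNeCount (Γ n)) (fun _ _ => Nat.zero_le _) hn
    omega
  · rw [h0 n hn]; simp [mNeCount]

theorem correct (s : ℕ) : ∀ (t : CTerm) (Γ : TEnv) (k : ℕ) (L : LType), Typ t (Γ, k, s) L →
    Tight Γ L → ∃ (h : CTerm) (n : ℕ), h.HNF ∧ HRed t n k h := by
  induction s using Nat.strong_induction_on with | _ s ih => ?_
  intro t Γ k L ht hT
  by_cases hn : t.HNF
  · obtain ⟨h1, h2⟩ := tight_bounds hT
    have hk : k = 0 := hnf_correct t hn _ _ ht hT.1 hT.2.1 h1 h2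
    subst hk
    exact ⟨t, 0, hn, .refl t⟩
  · simp only [CTerm.HNF, not_forall, not_not] at hn
    obtain ⟨u, hu | hu⟩ := hn
    · obtain ⟨⟨Γ', k', s'⟩, e, h⟩ := (tau_ok hu _ _).1 ht
      simp only [Prod.mk_add_mk, add_zero, Prod.mk.injEq] at e
      obtain ⟨rfl, rfl, rfl⟩ := e
      obtain ⟨v, n, hv, hr⟩ := ih s' (by omega) u _ _ _ h hT
      exact ⟨v, _, hv, .silent hu hr⟩
    · obtain ⟨⟨Γ', k', s'⟩, e, h⟩ := (int_ok hu _ _).1 ht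
      simp only [Prod.mk_add_mk, add_zero, Prod.mk.injEq] at e
      obtain ⟨rfl, rfl, rfl⟩ := e
      obtain ⟨v, n, hv, hr⟩ := ih s' (by omega) u _ _ _ h hT
      exact ⟨v, _, hv, .inter hu hr⟩

theorem neut_complete {t : CTerm} (h : Neut t) : ∀ L, AllSilent L → LType.neCount L = 0 →
    ∃ x L' s, Typ t (TEnv.single x L', 0, s) L ∧ AllSilent L' ∧ LType.neCount L' = 0 := by
  induction h with
  | var x => intro L h1 h2; exact ⟨x, L, 0, rfl, h1, h2⟩
  | app q u _ ih =>
    intro L h1 h2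
    obtain ⟨x, L', s, h, h3, h4⟩ := ih (.arrow [] q q L) (.arrow (by simp) h1)
      (by rw [neCount_arrow, h2]; simp [mNeCount])
    exact ⟨x, L', s + 1, ⟨_, 0, [], q, h, rfl, by simp [Player.gamma]⟩, h3, h4⟩

theorem hnf_complete (t : CTerm) : t.HNF → ∃ s Γ L, Typ t (Γ, 0, s) L ∧ AllSilent L ∧
    ((∃ x L', Γ = TEnv.single x L' ∧ AllSilent L' ∧ LType.neCount L' = 0 ∧ LType.neCount L = 0) ∨
      (Γ = 0 ∧ LType.neCount L = 1)) := by
  have neut : ∀ t, Neut t → ∃ s Γ L, Typ t (Γ, 0, s) L ∧ AllSilent L ∧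
    ((∃ x L', Γ = TEnv.single x L' ∧ AllSilent L' ∧ LType.neCount L' = 0 ∧ LType.neCount L = 0) ∨
      (Γ = 0 ∧ LType.neCount L = 1)) := by
    intro t ht
    have h0 : LType.neCount .atom = 0 := by rw [LType.neCount]
    obtain ⟨x, L', s, h1, h2, h3⟩ := neut_complete ht .atom .atom h0
    exact ⟨s, _, _, h1, .atom, Or.inl ⟨x, L', rfl, h2, h3, h0⟩⟩
  induction t with
  | var x => intro _; exact neut _ (.var x)
  | app q t u _ _ =>
    intro h
    rcases hnf_cases _ h with h | ⟨_, _, e⟩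
    · exact neut _ h
    · cases e
  | lam p t ih =>
    intro h
    obtain ⟨s, Γ, L, ht, hL, ⟨x, L', rfl, h1, h2, h3⟩ | ⟨rfl, h1⟩⟩ := ih (hnf_lam h)
    · cases x with
      | zero =>
        refine ⟨s, 0, .arrow [L'] p p L, ⟨p, _, _, rfl, ?_⟩, .arrow (by simpa using h1) hL,
          Or.inr ⟨rfl, ?_⟩⟩
        · convert ht using 1
          refine Prod.ext ?_ rfl
          funext n; cases n <;> simp [consW, TEnv.cons, TEnv.single]
        · rw [neCount_arrow]; simp [mNeCount, h2, h3]
      | succ x =>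
        refine ⟨s, TEnv.single x L', .arrow [] p p L, ⟨p, _, _, rfl, ?_⟩, .arrow (by simp) hL,
          Or.inl ⟨x, L', rfl, h1, h2, ?_⟩⟩
        · convert ht using 1
          refine Prod.ext ?_ rfl
          funext n; cases n <;> simp [consW, TEnv.cons, TEnv.single]
        · rw [neCount_arrow]; simp [mNeCount, h3]
    · refine ⟨s, 0, .arrow [] p p L, ⟨p, _, _, rfl, ?_⟩, .arrow (by simp) hL, Or.inr ⟨rfl, ?_⟩⟩
      · convert ht using 1
        refine Prod.ext ?_ rfl
        funext n; cases n <;> simp [consW, TEnv.cons]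
      · rw [neCount_arrow]; simp [mNeCount, h1]

theorem complete {t h : CTerm} {n k : ℕ} (hr : HRed t n k h) : h.HNF →
    ∃ (s : ℕ) (Γ : TEnv) (L : LType), Typ t (Γ, k, s) L ∧ Tight Γ L := by
  induction hr with
  | refl t =>
    intro hn
    obtain ⟨s, Γ, L, ht, hL, ⟨x, L', rfl, h1, h2, h3⟩ | ⟨rfl, h1⟩⟩ := hnf_complete t hn
    · refine ⟨s, _, L, ht, hL, ?_, {x}, ?_, ?_⟩
      · intro n A hA
        simp only [TEnv.single] at hA
        split_ifs at hA
        · rw [Multiset.mem_singleton.1 hA]; exact h1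
        · simp at hA
      · intro n hn; simp only [Finset.mem_singleton] at hn; simp [TEnv.single, hn]
      · simp [TEnv.single, mNeCount, h2, h3]
    · exact ⟨s, 0, L, ht, hL, by simp, ∅, by simp, by simp [h1]⟩
  | silent hs _ ih =>
    intro hn
    obtain ⟨s, Γ, L, ht, hT⟩ := ih hn
    exact ⟨s + 1, Γ, L, (tau_ok hs _ _).2 ⟨_, by simp, ht⟩, hT⟩
  | inter hs _ ih =>
    intro hn
    obtain ⟨s, Γ, L, ht, hT⟩ := ih hn
    exact ⟨s + 1, Γ, L, (int_ok hs _ _).2 ⟨_, by simp, ht⟩, hT⟩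

/-- Tight characterization: tight derivations measure exactly the number of
interaction steps of checkers head evaluations. -/
theorem tight_characterization (t : CTerm) :
    (∀ (Γ : TEnv) (k : ℕ) (L : LType), Nonempty (Deriv Γ k t L) → Tight Γ L →
      ∃ (h : CTerm) (n : ℕ), h.HNF ∧ HRed t n k h) ∧
    (∀ (h : CTerm) (n k : ℕ), HRed t n k h → h.HNF →
      ∃ (Γ : TEnv) (L : LType), Nonempty (Deriv Γ k t L) ∧ Tight Γ L) := by
  refine ⟨?_, ?_⟩
  · rintro Γ k L ⟨π⟩ hT
    obtain ⟨s, h⟩ := typ_of_deriv π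
    exact correct s t Γ k L h hT
  · intro h n k hr hn
    obtain ⟨s, Γ, L, ht, hT⟩ := complete hr hn
    exact ⟨Γ, L, deriv_of_typ t _ _ ht, hT⟩
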